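/- Let f be ω-regularly smooth on D with constant h and f'(x₀) = I. If x ∈ D satisfies ‖x − x₀‖ ≤ t for some t with 0 ≤ t < χ, then ‖f'(x) − f'(x₀)‖ ≤ ω(χ) − ω(χ − t) < 1; consequently the bounded linear operator f'(x) is invertible and ‖[f'(x)]⁻¹‖ ≤ 1/(1 − [ω(χ) − ω(χ − t)]). -/

import Mathlib

/-!
The two points `x₀` and `x` enter the smoothness inequality through
`m = min ‖f' x₀‖ ‖f' x‖ - h` and `d = ‖f' x - f' x₀‖`. With `a = ω⁻¹ m` it says
`ω⁻¹ (m + d) ≤ a + t`, that is, `d ≤ ω (a + t) - ω a`. Since `f' x₀ = I` has norm one, the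
triangle inequality gives `m + d ≥ 1 - h`, hence `a + t ≥ ω⁻¹ (m + d) ≥ χ`. The increments of the
concave function `ω` over intervals of length `t` decrease, so `a ≥ χ - t` yields
`d ≤ ω χ - ω (χ - t)` (`concave_increment_le`). The right side is smaller than
`ω χ = 1 - h ≤ 1`, and the Neumann series inverts `f' x` (`exists_inverse_of_near_id`).
-/

theorem concave_increment_le {ω : ℝ → ℝ} (hω : ConcaveOn ℝ (Set.Ici 0) ω) {u a t : ℝ}
    (hu : 0 ≤ u) (hua : u ≤ a) (ht : 0 ≤ t) : ω (a + t) - ω a ≤ ω (u + t) - ω u := by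
  rcases (add_nonneg (sub_nonneg.2 hua) ht).eq_or_lt with h0 | hL
  · have h1 : a = u := by linarith
    rw [h1]
  -- `a` and `u + t` are convex combinations of `u` and `a + t` with exchanged weights.
  have hp : 0 ≤ t / (a - u + t) := by positivity
  have hq : 0 ≤ (a - u) / (a - u + t) := div_nonneg (by linarith) hL.le
  have hpq : t / (a - u + t) + (a - u) / (a - u + t) = 1 := by field_simp; ring
  have hmu : u ∈ Set.Ici (0 : ℝ) := hu
  have hma : a + t ∈ Set.Ici (0 : ℝ) := Set.mem_Ici.2 (by linarith)
  have h1 := hω.2 hmu hma hp hq hpq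
  have h2 := hω.2 hmu hma hq hp (by rw [add_comm]; exact hpq)
  have e1 : t / (a - u + t) * u + (a - u) / (a - u + t) * (a + t) = a := by
    field_simp; ring
  have e2 : (a - u) / (a - u + t) * u + t / (a - u + t) * (a + t) = u + t := by
    field_simp; ring
  simp only [smul_eq_mul, e1, e2] at h1 h2
  have e3 : ω u + ω (a + t) = (t / (a - u + t) + (a - u) / (a - u + t)) * (ω u + ω (a + t)) := by
    rw [hpq, one_mul]
  linarith

theorem exists_inverse_of_near_id {X : Type*} [NormedAddCommGroup X] [NormedSpace ℝ X]
    [CompleteSpace X] (T : X →L[ℝ] X) {q : ℝ} (hT : ‖T - ContinuousLinearMap.id ℝ X‖ ≤ q)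
    (hq : q < 1) :
    ∃ A : X ≃L[ℝ] X, (A : X →L[ℝ] X) = T ∧ ‖(A.symm : X →L[ℝ] X)‖ ≤ 1 / (1 - q) := by
  have hT' : ‖(1 : X →L[ℝ] X) - T‖ ≤ q := by rw [norm_sub_rev]; exact hT
  let A : X ≃L[ℝ] X := ContinuousLinearEquiv.ofUnit (Units.oneSub (1 - T) (hT'.trans_lt hq))
  have hA : (A : X →L[ℝ] X) = T := by
    change ((Units.oneSub (1 - T) (hT'.trans_lt hq) : (X →L[ℝ] X)ˣ) : X →L[ℝ] X) = T
    simp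
  refine ⟨A, hA, ContinuousLinearMap.opNorm_le_bound _ (one_div_nonneg.2 (by linarith)) ?_⟩
  intro z
  obtain ⟨y, rfl⟩ := A.surjective z
  have hy : A y = T y := by rw [← hA]; rfl
  have h1 : ‖y - T y‖ ≤ q * ‖y‖ :=
    (((1 : X →L[ℝ] X) - T).le_opNorm y).trans (by gcongr)
  have h2 := norm_sub_norm_le y (T y)
  have h3 : 0 < 1 - q := by linarith
  simp only [ContinuousLinearEquiv.coe_coe, ContinuousLinearEquiv.symm_apply_apply]
  rw [hy, one_div, inv_mul_eq_div, le_div_iff₀ h3]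
  linarith

/-- If `f` is `ω`-regularly smooth on `D` with constant `h`, `f'(x₀) = I`,
and `x ∈ D` satisfies `‖x - x₀‖ ≤ t` with `0 ≤ t < χ = ω⁻¹(1 - h)`, then
`‖f'(x) - f'(x₀)‖ ≤ ω(χ) - ω(χ - t) < 1`; consequently `f'(x)` is invertible and
`‖[f'(x)]⁻¹‖ ≤ 1 / (1 - [ω(χ) - ω(χ - t)])`. -/
theorem derivative_invertible_in_ball
    {X : Type*} [NormedAddCommGroup X] [NormedSpace ℝ X] [CompleteSpace X]
    (D : Set X) (hD : Convex ℝ D) (x₀ : X) (hx₀ : x₀ ∈ D)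
    (f : X → X) (f' : X → X →L[ℝ] X)
    (hf : ∀ x ∈ D, HasFDerivWithinAt f (f' x) D x)
    (hfx₀ : f' x₀ = ContinuousLinearMap.id ℝ X)
    (ω ωinv : ℝ → ℝ)
    (hω_cont : ContinuousOn ω (Set.Ici 0))
    (hω_mono : StrictMonoOn ω (Set.Ici 0))
    (hω_conc : ConcaveOn ℝ (Set.Ici 0) ω)
    (hω0 : ω 0 = 0)
    (hω_nonneg : ∀ t, 0 ≤ t → 0 ≤ ω t)
    (hωinv_left : ∀ t, 0 ≤ t → ωinv (ω t) = t)
    (hωinv_right : ∀ s, 0 ≤ s → 0 ≤ ωinv s ∧ ω (ωinv s) = s)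
    (h : ℝ) (hh0 : 0 ≤ h) (hh1 : h ≤ 1) (hhf : ∀ x ∈ D, h ≤ ‖f' x‖)
    (hreg : ∀ x' ∈ D, ∀ x'' ∈ D,
      ωinv (min ‖f' x'‖ ‖f' x''‖ - h + ‖f' x'' - f' x'‖)
        - ωinv (min ‖f' x'‖ ‖f' x''‖ - h) ≤ ‖x'' - x'‖)
    (χ : ℝ) (hχdef : χ = ωinv (1 - h))
    (x : X) (hx : x ∈ D) (t : ℝ) (ht0 : 0 ≤ t) (htχ : t < χ)
    (hxt : ‖x - x₀‖ ≤ t) :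
    ‖f' x - f' x₀‖ ≤ ω χ - ω (χ - t) ∧ ω χ - ω (χ - t) < 1 ∧
      ∃ A : X ≃L[ℝ] X, (A : X →L[ℝ] X) = f' x ∧
        ‖(A.symm : X →L[ℝ] X)‖ ≤ 1 / (1 - (ω χ - ω (χ - t))) := by
  have hinv_mono : ∀ r s, 0 ≤ r → r ≤ s → ωinv r ≤ ωinv s := by
    intro r s hr hrs
    obtain ⟨a1, b1⟩ := hωinv_right r hr
    obtain ⟨a2, b2⟩ := hωinv_right s (hr.trans hrs)
    exact (hω_mono.le_iff_le a1 a2).1 (by rw [b1, b2]; exact hrs)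
  have hωχ : ω χ = 1 - h := by rw [hχdef]; exact (hωinv_right _ (by linarith)).2
  have hlt : ω χ - ω (χ - t) < 1 := by
    have h1 := hω_mono (Set.mem_Ici.2 le_rfl) (Set.mem_Ici.2 (by linarith : 0 ≤ χ - t))
      (by linarith)
    linarith
  have hd : ‖f' x - f' x₀‖ ≤ ω χ - ω (χ - t) := by
    rcases subsingleton_or_nontrivial X with hX | hX
    · -- In the zero space `‖I‖ = 0`, but every operator vanishes.
      have h0 : f' x - f' x₀ = 0 := Subsingleton.elim _ _
      rw [h0, norm_zero, sub_nonneg]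
      exact hω_mono.monotoneOn (Set.mem_Ici.2 (by linarith)) (Set.mem_Ici.2 (by linarith))
        (by linarith)
    have hone : ‖f' x₀‖ = 1 := by rw [hfx₀]; exact ContinuousLinearMap.norm_id
    have hr := hreg x₀ hx₀ x hx
    have hm : 0 ≤ min ‖f' x₀‖ ‖f' x‖ - h := sub_nonneg.2 (le_min (hhf _ hx₀) (hhf _ hx))
    have hmd : 1 - h ≤ min ‖f' x₀‖ ‖f' x‖ - h + ‖f' x - f' x₀‖ := by
      have h1 := norm_sub_norm_le (f' x₀) (f' x)
      rw [norm_sub_rev] at h1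
      have h2 := norm_nonneg (f' x - f' x₀)
      rcases min_choice ‖f' x₀‖ ‖f' x‖ with h3 | h3 <;> rw [h3] <;> linarith
    have hχ := hinv_mono _ _ (by linarith) hmd
    rw [← hχdef] at hχ
    obtain ⟨ha0, ha⟩ := hωinv_right _ hm
    obtain ⟨hb0, hb⟩ := hωinv_right _ (by linarith : 0 ≤ min ‖f' x₀‖ ‖f' x‖ - h + ‖f' x - f' x₀‖)
    have h4 := hω_mono.monotoneOn (Set.mem_Ici.2 hb0) (Set.mem_Ici.2 (add_nonneg ha0 ht0))
      (by linarith)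
    have h5 := concave_increment_le hω_conc (u := χ - t)
      (a := ωinv (min ‖f' x₀‖ ‖f' x‖ - h)) (t := t) (by linarith) (by linarith) ht0
    rw [sub_add_cancel] at h5
    linarith
  exact ⟨hd, hlt, exists_inverse_of_near_id (f' x) (by rw [← hfx₀]; exact hd) hlt⟩
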